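/- Let p be a prime, K a field of characteristic p, H := X − X^p ∈ K[X], and b ∈ ℕ with b ≤ p−1. For f ∈ K[X] one has H·f′ = b·f if and only if there exists g ∈ K[X] with f = H^b · g(X^p) (i.e. f equals H^b times the polynomial obtained from g by substituting X^p for X). -/

import Mathlib

open Polynomial

/-!
On products `H ^ k * g` the operator `f ↦ H * f' - n * H' * f` equals `H ^ k` times the operator
for `n - k` applied to `g`, so dividing by `H ^ b` reduces the equation `H * f' = b * H' * f` to
`g' = 0`, that is, to `g` being a polynomial in `X ^ p`. The division is possible because `H` is
coprime to `H'` and `1, …, b` are units: as long as `n ≠ 0`, the equation for `n` forces `H ∣ f`.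
-/

section CommRing

variable {R : Type*} [CommRing R]

theorem derivative_eq_zero_iff_exists_eq_expand {p : ℕ} (hp : p.Prime) [CharP R p] {f : R[X]} :
    derivative f = 0 ↔ ∃ g : R[X], f = expand R p g := by
  constructor
  · intro hf
    refine ⟨contract p f, ?_⟩
    ext n
    rw [coeff_expand hp.pos, coeff_contract hp.ne_zero]
    split_ifs with hpn
    · rw [Nat.div_mul_cancel hpn]
    · obtain ⟨m, rfl⟩ : ∃ m, n = m + 1 :=
        Nat.exists_eq_succ_of_ne_zero fun hn ↦ hpn (hn ▸ dvd_zero p)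
      have hunit : IsUnit ((m + 1 : ℕ) : R) := (CharP.isUnit_natCast_iff hp).mpr hpn
      have hcoeff : f.coeff (m + 1) * ((m + 1 : ℕ) : R) = 0 := by
        rw [Nat.cast_succ, ← coeff_derivative, hf, coeff_zero]
      exact hunit.mul_left_eq_zero.mp hcoeff
  · rintro ⟨g, rfl⟩
    rw [derivative_expand, CharP.cast_eq_zero, zero_mul, mul_zero]

theorem mem_nonZeroDivisors_of_separable {H : R[X]} (hH : H.Separable) :
    H ∈ nonZeroDivisors R[X] := by
  refine Polynomial.mem_nonZeroDivisors_iff.mpr fun a haH ↦ ?_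
  have haH' : a • derivative H = 0 := by rw [← derivative_smul, haH, derivative_zero]
  obtain ⟨u, v, huv⟩ := hH
  have ha : a • (1 : R[X]) = 0 := by
    rw [← huv, smul_add, ← mul_smul_comm, ← mul_smul_comm, haH, haH', mul_zero, mul_zero, add_zero]
  simpa using congrArg (coeff · 0) ha

theorem mul_derivative_pow (H : R[X]) (k : ℕ) :
    H * derivative (H ^ k) = k * (derivative H * H ^ k) := by
  cases k with
  | zero => simp
  | succ k =>
    rw [derivative_pow_succ, C_add, C_1, C_eq_natCast]
    push_cast
    ring

theorem mul_derivative_pow_mul_eq_iff {H : R[X]} (hH : H ∈ nonZeroDivisors R[X]) (k m : ℕ)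
    (g : R[X]) :
    H * derivative (H ^ k * g) = ((k + m : ℕ) : R[X]) * (derivative H * (H ^ k * g)) ↔
      H * derivative g = m * (derivative H * g) := by
  have hdefect : H * derivative (H ^ k * g) - ((k + m : ℕ) : R[X]) * (derivative H * (H ^ k * g)) =
      H ^ k * (H * derivative g - m * (derivative H * g)) := by
    rw [derivative_mul]
    push_cast
    linear_combination g * mul_derivative_pow H k
  rw [← sub_eq_zero, hdefect, mul_left_mem_nonZeroDivisors_eq_zero_iff (pow_mem hH k), sub_eq_zero]

theorem pow_dvd_of_mul_derivative_eq {p : ℕ} (hp : p.Prime) [CharP R p] {H : R[X]}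
    (hH : H.Separable) {b : ℕ} (hb : b < p) {f : R[X]}
    (hf : H * derivative f = b * (derivative H * f)) : H ^ b ∣ f := by
  induction b generalizing f with
  | zero => exact pow_zero H ▸ one_dvd f
  | succ b ih =>
    have hunit : IsUnit ((b + 1 : ℕ) : R[X]) :=
      (CharP.isUnit_natCast_iff hp).mpr (Nat.not_dvd_of_pos_of_lt b.succ_pos hb)
    have hdvd : H ∣ f :=
      hH.dvd_of_dvd_mul_left (hunit.dvd_mul_left.mp (Dvd.intro _ hf))
    obtain ⟨g, rfl⟩ := hdvd
    have hg : H * derivative g = b * (derivative H * g) := by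
      refine (mul_derivative_pow_mul_eq_iff (mem_nonZeroDivisors_of_separable hH) 1 b g).mp ?_
      rwa [pow_one, add_comm 1 b]
    rw [pow_succ']
    exact mul_dvd_mul_left H (ih (Nat.lt_of_succ_lt hb) hg)

theorem stmt_6_general {p : ℕ} (hp : p.Prime) [CharP R p] {H : R[X]} (hH : H.Separable)
    {b : ℕ} (hb : b < p) (f : R[X]) :
    H * derivative f = b * (derivative H * f) ↔ ∃ g : R[X], f = H ^ b * expand R p g := by
  have hreg := mem_nonZeroDivisors_of_separable hH
  have heq_iff (g : R[X]) : H * derivative (H ^ b * g) = b * (derivative H * (H ^ b * g)) ↔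
      derivative g = 0 := by
    simpa [mul_left_mem_nonZeroDivisors_eq_zero_iff hreg] using
      mul_derivative_pow_mul_eq_iff hreg b 0 g
  constructor
  · intro hf
    obtain ⟨g, rfl⟩ := pow_dvd_of_mul_derivative_eq hp hH hb hf
    obtain ⟨k, rfl⟩ := (derivative_eq_zero_iff_exists_eq_expand hp).mp ((heq_iff g).mp hf)
    exact ⟨k, rfl⟩
  · rintro ⟨g, rfl⟩
    exact (heq_iff _).mpr ((derivative_eq_zero_iff_exists_eq_expand hp).mpr ⟨g, rfl⟩)

theorem derivative_X_sub_X_pow_char (p : ℕ) [CharP R p] :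
    derivative (X - X ^ p : R[X]) = 1 := by
  rw [derivative_sub, derivative_X, derivative_X_pow, CharP.cast_eq_zero, C_0, zero_mul, sub_zero]

theorem separable_X_sub_X_pow_char (p : ℕ) [CharP R p] : (X - X ^ p : R[X]).Separable := by
  rw [separable_def, derivative_X_sub_X_pow_char]
  exact isCoprime_one_right

end CommRing

/-- Let `p` be a prime, `K` a field of characteristic `p`, `H := X − X^p`, and `b ≤ p−1`.
For `f ∈ K[X]` one has `H·f′ = b·f` if and only if `f = H^b · g(X^p)` for some `g ∈ K[X]`. -/
theorem stmt_6 (p : ℕ) (hp : p.Prime) (K : Type*) [Field K] [CharP K p]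
    (b : ℕ) (hb : b ≤ p - 1) (f : K[X]) :
    (X - X ^ p) * derivative f = (b : K[X]) * f ↔
      ∃ g : K[X], f = (X - X ^ p) ^ b * Polynomial.expand K p g := by
  simpa only [derivative_X_sub_X_pow_char, one_mul] using
    stmt_6_general hp (separable_X_sub_X_pow_char p) (Nat.lt_of_le_pred hp.pos hb) f
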